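/- If M and M' are equivalent linear tree-to-word transducers that are both in partial normal form, then M and M' are same-ordered. -/

import Mathlib

namespace LTWpaper

/-- Trees over a ranked alphabet: a symbol of arity `n` with `n` children. -/
inductive RTree (F : Type) (ar : F → ℕ) : Type
  | node (f : F) (ts : Fin (ar f) → RTree F ar) : RTree F ar

/-- A rule right-hand side `u₀ q₁(x_{σ(1)}) u₁ … q_n(x_{σ(n)}) u_n`:
`word i` is `u_i` (for `i : Fin (n+1)`), `st i` is `q_{i+1}` (for `i : Fin n`),
and position `i` reads the subtree `x_{perm i}`. -/
structure LTWRule (Δ Q : Type) (n : ℕ) where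
  word : Fin (n + 1) → List Δ
  st : Fin n → Q
  perm : Equiv.Perm (Fin n)

/-- A (deterministic) linear tree-to-word transducer with axiom `pre init(x) post`. -/
structure LTW (F : Type) (ar : F → ℕ) (Δ Q : Type) where
  pre : List Δ
  init : Q
  post : List Δ
  rules : Q → (f : F) → Option (LTWRule Δ Q (ar f))

/-- `u 0 ++ ws 0 ++ u 1 ++ ws 1 ++ ⋯ ++ ws (n-1) ++ u n`. -/
def interleave {Δ : Type} (n : ℕ) (u : Fin (n + 1) → List Δ) (ws : Fin n → List Δ) :
    List Δ :=
  u 0 ++ (List.finRange n).foldr (fun i acc => ws i ++ u i.succ ++ acc) []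

/-- The partial function `⟦M⟧_q` computed by state `q`. -/
def LTW.semState {F Δ Q : Type} {ar : F → ℕ} (M : LTW F ar Δ Q) :
    RTree F ar → Q → Option (List Δ)
  | .node f ts, q =>
    match M.rules q f with
    | none => none
    | some r =>
      if h : ∀ i : Fin (ar f), (M.semState (ts (r.perm i)) (r.st i)).isSome then
        some (interleave (ar f) r.word fun i => (M.semState (ts (r.perm i)) (r.st i)).get (h i))
      else none

/-- The partial function `⟦M⟧` computed by the transducer. -/
def LTW.sem {F Δ Q : Type} {ar : F → ℕ} (M : LTW F ar Δ Q) (t : RTree F ar) :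
    Option (List Δ) :=
  (M.semState t M.init).map fun w => M.pre ++ w ++ M.post

/-- The output language `L_q` of a state. -/
def LTW.lang {F Δ Q : Type} {ar : F → ℕ} (M : LTW F ar Δ Q) (q : Q) : Set (List Δ) :=
  {w | ∃ t, M.semState t q = some w}

/-- Standing assumption: every state has nonempty domain. -/
def LTW.NonemptyDoms {F Δ Q : Type} {ar : F → ℕ} (M : LTW F ar Δ Q) : Prop :=
  ∀ q : Q, ∃ t w, M.semState t q = some w

/-- `w^n`, the `n`-fold concatenation of the word `w`. -/
def listPow {Δ : Type} (w : List Δ) : ℕ → List Δ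
  | 0 => []
  | n + 1 => w ++ listPow w n

/-- `lcp L = ε`: the only common prefix of all words of `L` is the empty word. -/
def LcpEps {Δ : Type} (L : Set (List Δ)) : Prop :=
  ∀ w : List Δ, (∀ v ∈ L, w <+: v) → w = []

/-- `lcs L = ε`: the only common suffix of all words of `L` is the empty word. -/
def LcsEps {Δ : Type} (L : Set (List Δ)) : Prop :=
  ∀ w : List Δ, (∀ v ∈ L, w <:+ v) → w = []

/-- A language is earliest if `lcp L = lcs L = ε`. -/
def EarliestLang {Δ : Type} (L : Set (List Δ)) : Prop := LcpEps L ∧ LcsEps L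

/-- `L ⊆ w*`. -/
def SubPow {Δ : Type} (w : List Δ) (L : Set (List Δ)) : Prop :=
  ∀ v ∈ L, ∃ n : ℕ, v = listPow w n

/-- `L` is periodic of period `w`: `w` is a smallest word with `L ⊆ w*`. -/
def PeriodicOf {Δ : Type} (L : Set (List Δ)) (w : List Δ) : Prop :=
  SubPow w L ∧ ∀ w' : List Δ, SubPow w' L → w.length ≤ w'.length

/-- `L` is periodic. -/
def Periodic {Δ : Type} (L : Set (List Δ)) : Prop := ∃ w, PeriodicOf L w

/-- `L` is quasi-periodic on the left of handle `u` and period `w`: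
`w` is a smallest word with `L ⊆ u w*`. -/
def QPLeftOf {Δ : Type} (L : Set (List Δ)) (u w : List Δ) : Prop :=
  (∀ v ∈ L, ∃ n : ℕ, v = u ++ listPow w n) ∧
  ∀ w' : List Δ, (∀ v ∈ L, ∃ n : ℕ, v = u ++ listPow w' n) → w.length ≤ w'.length

/-- `L` is quasi-periodic on the right of handle `u` and period `w`:
`w` is a smallest word with `L ⊆ w* u`. -/
def QPRightOf {Δ : Type} (L : Set (List Δ)) (u w : List Δ) : Prop :=
  (∀ v ∈ L, ∃ n : ℕ, v = listPow w n ++ u) ∧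
  ∀ w' : List Δ, (∀ v ∈ L, ∃ n : ℕ, v = listPow w' n ++ u) → w.length ≤ w'.length

/-- `L` is quasi-periodic (on the left or on the right). -/
def QuasiPeriodic {Δ : Type} (L : Set (List Δ)) : Prop :=
  (∃ u w, QPLeftOf L u w) ∨ (∃ u w, QPRightOf L u w)

/-- The language `L u = { v u : v ∈ L }`. -/
def appendLang {Δ : Type} (L : Set (List Δ)) (u : List Δ) : Set (List Δ) :=
  {v | ∃ x ∈ L, v = x ++ u}

/-- The language `L₁ u L₂ = { a u b : a ∈ L₁, b ∈ L₂ }`. -/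
def pairLang {Δ : Type} (L₁ : Set (List Δ)) (u : List Δ) (L₂ : Set (List Δ)) :
    Set (List Δ) :=
  {v | ∃ a ∈ L₁, ∃ b ∈ L₂, v = a ++ u ++ b}

/-- An LTW is earliest: every state `q` satisfies `lcp L_q = lcs L_q = ε`, and in every rule
every part `qᵢ(x) uᵢ` satisfies `lcp (L_{qᵢ} uᵢ) = ε`. -/
def LTW.Earliest {F Δ Q : Type} {ar : F → ℕ} (M : LTW F ar Δ Q) : Prop :=
  (∀ q : Q, EarliestLang (M.lang q)) ∧
  ∀ (q : Q) (f : F) (r : LTWRule Δ Q (ar f)), M.rules q f = some r →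
    ∀ i : Fin (ar f), LcpEps (appendLang (M.lang (r.st i)) (r.word i.succ))

/-- An erasing state: `L_q = {ε}`. -/
def LTW.Erasing {F Δ Q : Type} {ar : F → ℕ} (M : LTW F ar Δ Q) (q : Q) : Prop :=
  M.lang q = {([] : List Δ)}

/-- Erase-ordered: in every rule, if `qᵢ` is erasing then every later `q_j` is erasing,
`σ(i) ≤ σ(j)` and `u_j = ε`. -/
def LTW.EraseOrdered {F Δ Q : Type} {ar : F → ℕ} (M : LTW F ar Δ Q) : Prop :=
  ∀ (q : Q) (f : F) (r : LTWRule Δ Q (ar f)), M.rules q f = some r →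
    ∀ i j : Fin (ar f), M.Erasing (r.st i) → i ≤ j →
      M.Erasing (r.st j) ∧ r.perm i ≤ r.perm j ∧ r.word j.succ = []

/-- Co-reachable pairs of states of two transducers over the same input alphabet. -/
inductive CoReach {F Δ Q₁ Q₂ : Type} {ar : F → ℕ}
    (M₁ : LTW F ar Δ Q₁) (M₂ : LTW F ar Δ Q₂) : Q₁ → Q₂ → Prop
  | base : CoReach M₁ M₂ M₁.init M₂.init
  | step {q₁ : Q₁} {q₂ : Q₂} {f : F} {r₁ : LTWRule Δ Q₁ (ar f)} {r₂ : LTWRule Δ Q₂ (ar f)}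
      {i j : Fin (ar f)} :
      CoReach M₁ M₂ q₁ q₂ → M₁.rules q₁ f = some r₁ → M₂.rules q₂ f = some r₂ →
      r₁.perm i = r₂.perm j → CoReach M₁ M₂ (r₁.st i) (r₂.st j)

/-- Two LTWs are same-ordered: co-reachable states either both lack a rule for `f`,
or have rules for `f` with the same permutation. -/
def SameOrdered {F Δ Q₁ Q₂ : Type} {ar : F → ℕ}
    (M₁ : LTW F ar Δ Q₁) (M₂ : LTW F ar Δ Q₂) : Prop :=
  ∀ q₁ q₂, CoReach M₁ M₂ q₁ q₂ → ∀ f : F,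
    (M₁.rules q₁ f = none ∧ M₂.rules q₂ f = none) ∨
    ∃ (r₁ : LTWRule Δ Q₁ (ar f)) (r₂ : LTWRule Δ Q₂ (ar f)),
      M₁.rules q₁ f = some r₁ ∧ M₂.rules q₂ f = some r₂ ∧ r₁.perm = r₂.perm

/-- `Accessible q p`: state `p` is accessible from state `q`. -/
inductive LTW.Accessible {F Δ Q : Type} {ar : F → ℕ} (M : LTW F ar Δ Q) : Q → Q → Prop
  | refl (q : Q) : M.Accessible q q
  | step {q p : Q} {f : F} {r : LTWRule Δ Q (ar f)} (i : Fin (ar f)) :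
      M.Accessible q p → M.rules p f = some r → M.Accessible q (r.st i)

/-- Partial normal form. -/
def LTW.PartialNormalForm {F Δ Q : Type} {ar : F → ℕ} (M : LTW F ar Δ Q) : Prop :=
  (∀ q : Q, QuasiPeriodic (M.lang q) → EarliestLang (M.lang q)) ∧
  M.EraseOrdered ∧
  ∀ (q : Q) (f : F) (r : LTWRule Δ Q (ar f)), M.rules q f = some r →
    ∀ (i : ℕ) (hi : i + 1 < ar f),
      QuasiPeriodic (pairLang (M.lang (r.st ⟨i, Nat.lt_of_succ_lt hi⟩))
          (r.word (Fin.succ ⟨i, Nat.lt_of_succ_lt hi⟩)) (M.lang (r.st ⟨i + 1, hi⟩))) →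
      EarliestLang (pairLang (M.lang (r.st ⟨i, Nat.lt_of_succ_lt hi⟩))
          (r.word (Fin.succ ⟨i, Nat.lt_of_succ_lt hi⟩)) (M.lang (r.st ⟨i + 1, hi⟩))) ∧
      r.perm ⟨i, Nat.lt_of_succ_lt hi⟩ < r.perm ⟨i + 1, hi⟩

section Words
variable {Δ : Type}

theorem listPow_add (w : List Δ) (m n : ℕ) : listPow w (m + n) = listPow w m ++ listPow w n := by
  induction m with
  | zero => simp [listPow]
  | succ k ih => rw [Nat.succ_add]; simp [listPow, ih]

theorem listPow_comm (w : List Δ) (m n : ℕ) :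
    listPow w m ++ listPow w n = listPow w n ++ listPow w m := by
  rw [← listPow_add, ← listPow_add, Nat.add_comm]

theorem listPow_length (w : List Δ) (n : ℕ) : (listPow w n).length = n * w.length := by
  induction n with
  | zero => simp [listPow]
  | succ k ih => simp [listPow, ih, Nat.succ_mul, Nat.add_comm]

theorem comm_pow {s r : List Δ} (h : s ++ r = r ++ s) (n : ℕ) :
    s ++ listPow r n = listPow r n ++ s := by
  induction n with
  | zero => simp [listPow]
  | succ k ih =>
    simp only [listPow]
    rw [← List.append_assoc, h, List.append_assoc, ih, List.append_assoc]

theorem le_pow_length {r : List Δ} (hr : r ≠ []) (n : ℕ) : n ≤ (listPow r n).length := by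
  rw [listPow_length]
  exact Nat.le_mul_of_pos_right _ (List.length_pos_iff.2 hr)

theorem prefix_pow {s r : List Δ} (h : s ++ r = r ++ s) (hr : r ≠ []) {n : ℕ}
    (hn : s.length ≤ n) : s <+: listPow r n := by
  have h1 : s <+: listPow r n ++ s := ⟨_, comm_pow h n⟩
  exact List.prefix_of_prefix_length_le h1 (List.prefix_append _ _)
    (hn.trans (le_pow_length hr n))

theorem exists_root {r : List Δ} (hr : r ≠ []) :
    ∃ p : List Δ, ∀ s, s ++ r = r ++ s → ∃ n, s = listPow p n := by
  obtain ⟨p, ⟨hp0, hp⟩, hmin⟩ := WellFounded.has_min (measure (List.length (α := Δ))).wf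
    {p | p ≠ [] ∧ p ++ r = r ++ p} ⟨r, hr, rfl⟩
  refine ⟨p, ?_⟩
  have key : ∀ N (s : List Δ), s.length ≤ N → s ++ r = r ++ s → ∃ n, s = listPow p n := by
    intro N
    induction N with
    | zero =>
      intro s hs _
      exact ⟨0, by simpa [listPow] using hs⟩
    | succ N ih =>
      intro s hs hc
      by_cases hs0 : s = []
      · exact ⟨0, by simpa [listPow] using hs0⟩
      have hle : p.length ≤ s.length := by
        have := hmin s ⟨hs0, hc⟩
        exact not_lt.1 this
      have h1 := prefix_pow hc hr (n := s.length) le_rfl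
      have h2 := prefix_pow hp hr (n := s.length) hle
      obtain ⟨s', rfl⟩ := List.prefix_of_prefix_length_le h2 h1 hle
      have hpl := List.length_pos_iff.2 hp0
      obtain ⟨n, rfl⟩ := ih s' (by simp at hs; omega) (by
        have : p ++ (s' ++ r) = p ++ (r ++ s') := by
          rw [← List.append_assoc, hc, ← List.append_assoc, ← hp, List.append_assoc]
        exact List.append_cancel_left this)
      exact ⟨n + 1, rfl⟩
  intro s hs
  exact key _ s le_rfl hs

theorem comm_trans {s r t : List Δ} (hr : r ≠ []) (h1 : s ++ r = r ++ s) (h2 : t ++ r = r ++ t) :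
    s ++ t = t ++ s := by
  obtain ⟨p, hp⟩ := exists_root hr
  obtain ⟨m, rfl⟩ := hp s h1
  obtain ⟨n, rfl⟩ := hp t h2
  exact listPow_comm _ _ _

theorem conj_pow {z u r : List Δ} (h : z ++ u = u ++ r) (n : ℕ) :
    listPow z n ++ u = u ++ listPow r n := by
  induction n with
  | zero => simp [listPow]
  | succ k ih =>
    simp only [listPow]
    rw [List.append_assoc, ih, ← List.append_assoc, h, List.append_assoc]

theorem conj_lemma {z z0 u r0 : List Δ} (h0 : z0 ≠ []) (hc : z ++ z0 = z0 ++ z)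
    (hu : z0 ++ u = u ++ r0) : ∃ z', z ++ u = u ++ z' ∧ z' ++ r0 = r0 ++ z' := by
  have h1 : u <+: listPow z0 u.length :=
    List.prefix_of_prefix_length_le ⟨_, (conj_pow hu u.length).symm⟩ (List.prefix_append _ _)
      (le_pow_length h0 _)
  have h2 : u <+: z ++ listPow z0 u.length := by
    rw [comm_pow hc]
    exact h1.trans (List.prefix_append _ _)
  have h3 : z ++ u <+: z ++ listPow z0 u.length := (List.prefix_append_right_inj z).2 h1
  obtain ⟨z', hz'⟩ := List.prefix_of_prefix_length_le h2 h3 (by simp)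
  refine ⟨z', hz'.symm, ?_⟩
  have : u ++ (z' ++ r0) = u ++ (r0 ++ z') := by
    rw [← List.append_assoc, hz', List.append_assoc, ← hu, ← List.append_assoc, hc,
      List.append_assoc, ← hz', ← List.append_assoc, hu, List.append_assoc]
  exact List.append_cancel_left this

theorem incomparable_split : ∀ (l m : List Δ), ¬ l <+: m → ¬ m <+: l →
    ∃ e c d s t, c ≠ d ∧ l = e ++ c :: s ∧ m = e ++ d :: t
  | [], m, h, _ => absurd (List.nil_prefix) h
  | _ :: _, [], _, h => absurd (List.nil_prefix) h
  | x :: l, y :: m, h1, h2 => by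
    by_cases hxy : x = y
    · subst hxy
      rw [List.cons_prefix_cons] at h1 h2
      obtain ⟨e, c, d, s, t, h, rfl, rfl⟩ := incomparable_split l m
        (fun h => h1 ⟨rfl, h⟩) (fun h => h2 ⟨rfl, h⟩)
      exact ⟨x :: e, c, d, s, t, h, rfl, rfl⟩
    · exact ⟨[], x, y, l, m, hxy, rfl, rfl⟩

theorem mismatch_prefix {e b s t s' t' : List Δ} {c d : Δ} (hcd : c ≠ d)
    (h1 : e ++ c :: s = b ++ s') (h2 : e ++ d :: t = b ++ t') :
    ∃ k, e = b ++ k ∧ s' = k ++ c :: s ∧ t' = k ++ d :: t := by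
  rw [List.append_eq_append_iff] at h1
  rcases h1 with ⟨k, rfl, h⟩ | ⟨k, rfl, h⟩
  · rcases k with _ | ⟨x, k⟩
    · simp only [List.append_nil, List.append_cancel_left_eq, List.nil_append] at *
      exact ⟨[], by simp, h.symm, by simpa using h2.symm⟩
    · simp at h h2
      exact absurd (h.1.trans h2.1.symm) hcd
  · simp only [List.append_assoc, List.append_cancel_left_eq] at h2
    exact ⟨k, rfl, h, h2.symm⟩

theorem chain_of_eq {X Y : Type} {f a : X → List Δ} {g b : Y → List Δ}
    (h : ∀ x y, f x ++ g y = b y ++ a x) (hb : ∃ y1 y2, b y1 ≠ b y2) (x1 x2 : X) :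
    f x1 <+: f x2 ∨ f x2 <+: f x1 := by
  by_contra hcon
  rw [not_or] at hcon
  obtain ⟨e, c, d, s, t, hcd, h1, h2⟩ := incomparable_split _ _ hcon.1 hcon.2
  obtain ⟨y1, y2, hy⟩ := hb
  have H : ∀ y, ∃ k, e = b y ++ k ∧ a x1 = k ++ c :: (s ++ g y) ∧ a x2 = k ++ d :: (t ++ g y) := by
    intro y
    apply mismatch_prefix hcd
    · rw [← h, h1]; simp
    · rw [← h, h2]; simp
  obtain ⟨k1, e1, p1, q1⟩ := H y1
  obtain ⟨k2, e2, p2, q2⟩ := H y2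
  obtain ⟨j, hj, -, -⟩ := mismatch_prefix hcd (p1.symm.trans p2) (q1.symm.trans q2)
  obtain ⟨j', hj', -, -⟩ := mismatch_prefix hcd (p2.symm.trans p1) (q2.symm.trans q1)
  have hk : k1 = k2 := by
    have l1 := congrArg List.length hj
    have l2 := congrArg List.length hj'
    simp at l1 l2
    have : j = [] := List.length_eq_zero_iff.1 (by omega)
    simpa [this] using hj
  subst hk
  exact hy (List.append_cancel_right (e1.symm.trans e2))

theorem suffix_chain_of_eq {X Y : Type} {f a : X → List Δ} {g b : Y → List Δ}
    (h : ∀ x y, f x ++ g y = b y ++ a x) (ha : ∃ y1 y2, a y1 ≠ a y2) (y1 y2 : Y) :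
    g y1 <:+ g y2 ∨ g y2 <:+ g y1 := by
  have := chain_of_eq (f := fun y => (g y).reverse) (g := fun x => (f x).reverse)
    (b := fun x => (a x).reverse) (a := fun y => (b y).reverse)
    (fun y x => by rw [← List.reverse_append, h, List.reverse_append])
    (by obtain ⟨u, v, huv⟩ := ha; exact ⟨u, v, fun h => huv (List.reverse_injective h)⟩) y1 y2
  simpa [List.reverse_prefix] using this

theorem exists_min_len {X : Type} (f : X → List Δ) (x : X) :
    ∃ x0, ∀ x, (f x0).length ≤ (f x).length := by
  obtain ⟨p, -, hmin⟩ := WellFounded.has_min (measure (fun x => (f x).length)).wf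
    Set.univ ⟨x, trivial⟩
  exact ⟨p, fun x => not_lt.1 (hmin x trivial)⟩

theorem keyK {X Y : Type} {f a : X → List Δ} {g b : Y → List Δ}
    (h : ∀ x y, f x ++ g y = b y ++ a x) (hf : ∃ x1 x2, f x1 ≠ f x2) (hg : ∃ y1 y2, g y1 ≠ g y2) :
    ∃ (x0 : X) (y0 : Y) (s : X → List Δ) (r : Y → List Δ), (∀ x, f x = f x0 ++ s x) ∧ (∀ y, g y = r y ++ g y0) ∧
      ∀ x y, s x ++ r y = r y ++ s x := by
  obtain ⟨x1, x2, hx⟩ := hf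
  obtain ⟨y1, y2, hy⟩ := hg
  have ha : a x1 ≠ a x2 := fun e => hx (List.append_cancel_right ((h x1 y1).trans
    ((congrArg _ e).trans (h x2 y1).symm)))
  have hb : b y1 ≠ b y2 := fun e => hy (List.append_cancel_left (as := f x1) ((h x1 y1).trans
    ((congrArg (· ++ a x1) e).trans (h x1 y2).symm)))
  obtain ⟨x0, hx0⟩ := exists_min_len f x1
  obtain ⟨y0, hy0⟩ := exists_min_len g y1
  have hl : ∀ x y, (f x).length + (g y).length = (b y).length + (a x).length := by
    intro x y; simpa using congrArg List.length (h x y)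
  have pre : ∀ {l m : List Δ}, (l <+: m ∨ m <+: l) → l.length ≤ m.length → ∃ s, m = l ++ s := by
    intro l m hh hlen
    rcases hh with ⟨s, rfl⟩ | hh
    · exact ⟨s, rfl⟩
    · exact ⟨[], by simp [List.IsPrefix.eq_of_length_le hh hlen]⟩
  have suf : ∀ {l m : List Δ}, (l <:+ m ∨ m <:+ l) → l.length ≤ m.length → ∃ s, m = s ++ l := by
    intro l m hh hlen
    rcases hh with ⟨s, rfl⟩ | hh
    · exact ⟨s, rfl⟩
    · exact ⟨[], by simp [List.IsSuffix.eq_of_length_le hh hlen]⟩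
  choose s hs using fun x => pre (chain_of_eq h ⟨y1, y2, hb⟩ x0 x) (hx0 x)
  choose r hr using fun y => suf (suffix_chain_of_eq h ⟨x1, x2, ha⟩ y0 y) (hy0 y)
  choose r' hr' using fun y => pre (chain_of_eq (fun y x => (h x y).symm) ⟨x1, x2, hx⟩ y0 y)
    (by have := hl x0 y0; have := hl x0 y; have := hy0 y; omega)
  choose s' hs' using fun x => suf (suffix_chain_of_eq (fun y x => (h x y).symm)
    ⟨y1, y2, hy⟩ x0 x)
    (by have := hl x0 y0; have := hl x y0; have := hx0 x; omega)
  refine ⟨x0, y0, s, r, hs, hr, fun x y => ?_⟩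
  have e00 := h x0 y0
  have ex := h x y0
  have ey := h x0 y
  have exy := h x y
  rw [hs x, hr y, hr' y, hs' x] at exy
  rw [hs x, hs' x] at ex
  rw [hr y, hr' y] at ey
  rw [List.append_eq_append_iff] at e00
  rcases e00 with ⟨c, h1, h2⟩ | ⟨c, h1, h2⟩
  · simp only [h1, h2, List.append_assoc, List.append_cancel_left_eq] at ex ey exy
    simp only [← List.append_assoc, List.append_cancel_right_eq] at ex ey exy
    have : (s x ++ r y) ++ c = (r y ++ s x) ++ c := by
      rw [exy, ← ey, List.append_assoc, ← ex, List.append_assoc]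
    exact List.append_cancel_right this
  · simp only [h1, h2, List.append_assoc, List.append_cancel_left_eq] at ex ey exy
    simp only [← List.append_assoc, List.append_cancel_right_eq] at ex ey exy
    have : c ++ (s x ++ r y) = c ++ (r y ++ s x) := by
      rw [← List.append_assoc, exy, List.append_assoc, ← ex, ← List.append_assoc, ← ey,
        List.append_assoc]
    exact List.append_cancel_left this

theorem quasi_left {L : Set (List Δ)} {u w : List Δ}
    (h : ∀ v ∈ L, ∃ n : ℕ, v = u ++ listPow w n) : QuasiPeriodic L := by
  obtain ⟨p, hp, hmin⟩ := WellFounded.has_min (measure (List.length (α := Δ))).wf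
    {w | ∀ v ∈ L, ∃ n : ℕ, v = u ++ listPow w n} ⟨w, h⟩
  exact Or.inl ⟨u, p, hp, fun w' hw' => not_lt.1 (hmin w' hw')⟩

theorem quasi_right {L : Set (List Δ)} {u w : List Δ}
    (h : ∀ v ∈ L, ∃ n : ℕ, v = listPow w n ++ u) : QuasiPeriodic L := by
  obtain ⟨p, hp, hmin⟩ := WellFounded.has_min (measure (List.length (α := Δ))).wf
    {w | ∀ v ∈ L, ∃ n : ℕ, v = listPow w n ++ u} ⟨w, h⟩
  exact Or.inr ⟨u, p, hp, fun w' hw' => not_lt.1 (hmin w' hw')⟩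

theorem keyJ {X Y : Type} {f a : X → List Δ} {g b : Y → List Δ} {A u B C V D : List Δ}
    (h : ∀ x y, A ++ f x ++ u ++ g y ++ B = C ++ b y ++ V ++ a x ++ D)
    (hf : ∃ x1 x2, f x1 ≠ f x2) (hg : ∃ y1 y2, g y1 ≠ g y2)
    (ef : QuasiPeriodic (Set.range f) → EarliestLang (Set.range f))
    (eg : QuasiPeriodic (Set.range g) → EarliestLang (Set.range g)) :
    (∃ x, f x = []) ∧ (∃ y, g y = []) ∧ (∀ x x', f x ++ f x' = f x' ++ f x) ∧
    (∀ y y', g y ++ g y' = g y' ++ g y) ∧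
    ∀ x, ∃ s, f x ++ u = u ++ s ∧ ∀ y, s ++ g y = g y ++ s := by
  have hf' := hf
  have hg' := hg
  obtain ⟨x1, x2, hx⟩ := hf
  obtain ⟨y1, y2, hy⟩ := hg
  obtain ⟨x0, y0, s, r, h1, h2, h3⟩ := keyK (f := fun x => A ++ f x) (g := fun y => u ++ g y ++ B)
    (b := fun y => C ++ b y ++ V) (a := fun x => a x ++ D)
    (fun x y => by simpa using h x y) ⟨x1, x2, by simpa using hx⟩ ⟨y1, y2, by simpa using hy⟩
  have hr : ∃ y, r y ≠ [] := by
    by_contra! hc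
    have e1 := h2 y1
    have e2 := h2 y2
    rw [hc] at e1 e2
    exact hy (by simpa using e1.trans e2.symm)
  obtain ⟨y3, hr3⟩ := hr
  obtain ⟨p, hp⟩ := exists_root hr3
  have hfs : ∀ x, f x = f x0 ++ s x := fun x => by simpa using h1 x
  have hfx0 : f x0 = [] := by
    refine (ef (quasi_left (u := f x0) (w := p) ?_)).1 _ ?_
    · rintro _ ⟨x, rfl⟩
      obtain ⟨n, hn⟩ := hp (s x) (h3 x y3)
      exact ⟨n, by rw [← hn, ← hfs]⟩
    · rintro _ ⟨x, rfl⟩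
      exact ⟨s x, (hfs x).symm⟩
  have cf : ∀ x x', f x ++ f x' = f x' ++ f x := by
    intro x x'
    rw [hfs x, hfs x', hfx0]
    exact comm_trans hr3 (h3 x y3) (h3 x' y3)
  obtain ⟨x0', y0', s', r', h1', h2', h3'⟩ := keyK (f := fun x => A ++ f x ++ u)
    (g := fun y => g y ++ B)
    (b := fun y => C ++ b y ++ V) (a := fun x => a x ++ D)
    (fun x y => by simpa using h x y) ⟨x1, x2, by simpa using hx⟩ ⟨y1, y2, by simpa using hy⟩
  have hs : ∃ x, s' x ≠ [] := by
    by_contra! hc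
    have e1 := h1' x1
    have e2 := h1' x2
    rw [hc] at e1 e2
    exact hx (by simpa using e1.trans e2.symm)
  obtain ⟨x3, hs3⟩ := hs
  obtain ⟨p', hp'⟩ := exists_root hs3
  have hgr : ∀ y, g y = r' y ++ g y0' := fun y => by
    have := h2' y
    simp only [← List.append_assoc, List.append_cancel_right_eq] at this
    exact this
  have hgy0 : g y0' = [] := by
    refine (eg (quasi_right (u := g y0') (w := p') ?_)).2 _ ?_
    · rintro _ ⟨y, rfl⟩
      obtain ⟨n, hn⟩ := hp' (r' y) (h3' x3 y).symm
      exact ⟨n, by rw [← hn, ← hgr]⟩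
    · rintro _ ⟨y, rfl⟩
      exact ⟨r' y, (hgr y).symm⟩
  have cg : ∀ y y', g y ++ g y' = g y' ++ g y := by
    intro x x'
    rw [hgr x, hgr x', hgy0]
    simp only [List.append_nil]
    exact comm_trans hs3 (h3' x3 x).symm (h3' x3 x').symm
  have hfu : ∀ x, f x ++ u = f x0' ++ u ++ s' x := fun x => by
    have := h1' x
    simpa using this
  have hx0' : f x0' = [] := by
    have := congrArg List.length (hfu x0)
    rw [hfx0] at this
    simp at this
    exact List.length_eq_zero_iff.1 (by omega)
  refine ⟨⟨x0, hfx0⟩, ⟨y0', hgy0⟩, cf, cg, fun x => ⟨s' x, ?_, fun y => ?_⟩⟩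
  · rw [hfu, hx0']; rfl
  · rw [hgr y, hgy0, List.append_nil]; exact h3' x y

end Words

section Abstract
variable {Δ : Type}

/-- Concatenation of `len` consecutive blocks `z t ++ w (t+1)` from position `i`. -/
def seg (w z : ℕ → List Δ) : ℕ → ℕ → List Δ
  | _, 0 => []
  | i, len + 1 => z i ++ w (i + 1) ++ seg w z (i + 1) len

theorem seg_succ (w z : ℕ → List Δ) (i len : ℕ) :
    seg w z i (len + 1) = z i ++ w (i + 1) ++ seg w z (i + 1) len := rfl

theorem dep_apply {n : ℕ} {D : Fin n → Type} (b : ∀ k, D k → List Δ) (σ : Equiv.Perm (Fin n))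
    (x : ∀ k, D k) (k : Fin n) : b (σ (σ.symm k)) (x (σ (σ.symm k))) = b k (x k) := by
  rw [Equiv.apply_symm_apply]

theorem seg_add (w z : ℕ → List Δ) (m n i : ℕ) :
    seg w z i (m + n) = seg w z i m ++ seg w z (i + m) n := by
  induction m generalizing i with
  | zero => simp [seg]
  | succ k ih =>
    rw [Nat.succ_add]
    simp only [seg, ih, List.append_assoc]
    rw [Nat.add_right_comm, Nat.add_assoc]

theorem seg_congr (w : ℕ → List Δ) {z z' : ℕ → List Δ} (n i : ℕ)
    (h : ∀ t, i ≤ t → t < i + n → z t = z' t) : seg w z i n = seg w z' i n := by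
  induction n generalizing i with
  | zero => rfl
  | succ k ih =>
    simp only [seg]
    rw [h i le_rfl (by omega), ih (i + 1) (fun t h1 h2 => h t (by omega) (by omega))]

theorem seg_nil (w z : ℕ → List Δ) (n i : ℕ)
    (h : ∀ t, i ≤ t → t < i + n → z t = [] ∧ w (t + 1) = []) : seg w z i n = [] := by
  induction n generalizing i with
  | zero => rfl
  | succ k ih =>
    simp only [seg]
    rw [(h i le_rfl (by omega)).1, (h i le_rfl (by omega)).2,
      ih (i + 1) (fun t h1 h2 => h t (by omega) (by omega))]
    rfl

theorem seg_mid (w z : ℕ → List Δ) (n i m : ℕ) (h1 : i ≤ m) (h2 : m ≤ i + n)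
    (hz : ∀ t, i < t → t < i + n + 1 → z t = [])
    (hw : ∀ t, i ≤ t → t < i + n + 1 → t ≠ m → w (t + 1) = []) :
    w (i + 1) ++ seg w z (i + 1) n = w (m + 1) := by
  induction n generalizing i with
  | zero =>
    obtain rfl : i = m := by omega
    simp [seg]
  | succ k ih =>
    by_cases him : i = m
    · subst him
      rw [seg_nil, List.append_nil]
      intro t ht ht'
      exact ⟨hz t (by omega) (by omega), hw t (by omega) (by omega) (by omega)⟩
    · rw [hw i le_rfl (by omega) him]
      simp only [seg, List.nil_append]
      rw [hz (i + 1) (by omega) (by omega), List.nil_append]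
      exact ih (i + 1) (by omega) (by omega) (fun t a b => hz t (by omega) (by omega))
        (fun t a b c => hw t (by omega) (by omega) c)

/-- Extension of a finite family of words to all naturals. -/
def ext {n : ℕ} (z : Fin n → List Δ) (t : ℕ) : List Δ := if h : t < n then z ⟨t, h⟩ else []

theorem ext_fin {n : ℕ} (z : Fin n → List Δ) (i : Fin n) : ext z i = z i := by
  simp [ext]

theorem foldr_seg (w z : ℕ → List Δ) (n k : ℕ) :
    (List.finRange n).foldr (fun i acc => z (i.val + k) ++ w (i.val + k + 1) ++ acc) []
      = seg w z k n := by
  induction n generalizing k with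
  | zero => rfl
  | succ n ih =>
    rw [List.finRange_succ]
    simp only [List.foldr_cons, List.foldr_map, seg, Fin.val_zero, Nat.zero_add]
    rw [← ih (k + 1)]
    simp only [Fin.val_succ]
    congr 2
    funext i acc
    rw [Nat.add_right_comm i.val 1 k, Nat.add_assoc i.val k 1]

theorem interleave_seg {n : ℕ} (u : Fin (n + 1) → List Δ) (z : Fin n → List Δ) :
    interleave n u z = ext u 0 ++ seg (ext u) (ext z) 0 n := by
  unfold interleave
  rw [← foldr_seg]
  congr 1
  have : ∀ i : Fin n, u i.succ = ext u (i.val + 1) := fun i => (ext_fin u i.succ).symm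
  simp only [this, Nat.add_zero]
  congr 1
  funext i acc
  rw [ext_fin]

theorem interleave_split1 {n : ℕ} (u : Fin (n + 1) → List Δ) (z0 : Fin n → List Δ) (i : Fin n) :
    ∃ P S, ∀ z : Fin n → List Δ, (∀ t, t ≠ i → z t = z0 t) →
      interleave n u z = P ++ z i ++ S := by
  refine ⟨ext u 0 ++ seg (ext u) (ext z0) 0 i,
    ext u (i + 1) ++ seg (ext u) (ext z0) (i + 1) (n - i - 1), fun z hz => ?_⟩
  have he : ∀ t, t ≠ i.val → ext z t = ext z0 t := by
    intro t ht
    unfold ext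
    split_ifs with h
    · exact hz _ (fun h => ht (congrArg Fin.val h))
    · rfl
  have hn : n = i.val + ((n - i - 1) + 1) := by have := i.2; omega
  rw [interleave_seg]
  conv_lhs => rw [show seg (ext u) (ext z) 0 n = seg (ext u) (ext z) 0 (i.val + ((n - i - 1) + 1))
    from congrArg _ hn]
  rw [seg_add, Nat.zero_add]
  simp only [seg]
  rw [ext_fin z i, seg_congr (ext u) (z := ext z) (z' := ext z0) i 0
    (fun t _ h => he t (by omega)),
    seg_congr (ext u) (z := ext z) (z' := ext z0) (n - i - 1) (i.val + 1)
    (fun t h _ => he t (by omega))]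
  simp only [List.append_assoc]

theorem interleave_split2 {n : ℕ} (u : Fin (n + 1) → List Δ) (z0 : Fin n → List Δ) (i j : Fin n)
    (hij : i < j) :
    ∃ P V S, (∀ z : Fin n → List Δ, (∀ t, t ≠ i → t ≠ j → z t = z0 t) →
      interleave n u z = P ++ z i ++ V ++ z j ++ S) ∧
      ∀ m, i.val ≤ m → m < j.val → (∀ t : Fin n, i < t → t < j → z0 t = []) →
        (∀ t, i.val ≤ t → t < j.val → t ≠ m → ext u (t + 1) = []) → V = ext u (m + 1) := by
  have hij' : i.val < j.val := hij
  refine ⟨ext u 0 ++ seg (ext u) (ext z0) 0 i,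
    ext u (i + 1) ++ seg (ext u) (ext z0) (i + 1) (j - i - 1),
    ext u (j + 1) ++ seg (ext u) (ext z0) (j + 1) (n - j - 1), fun z hz => ?_, ?_⟩
  · have he : ∀ t, t ≠ i.val → t ≠ j.val → ext z t = ext z0 t := by
      intro t ht ht'
      unfold ext
      split_ifs with h
      · exact hz _ (fun h => ht (congrArg Fin.val h)) (fun h => ht' (congrArg Fin.val h))
      · rfl
    have hn : n = i.val + (((j - i - 1) + ((n - j - 1) + 1)) + 1) := by
      have := i.2; have := j.2; omega
    rw [interleave_seg]
    conv_lhs => rw [show seg (ext u) (ext z) 0 n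
      = seg (ext u) (ext z) 0 (i.val + (((j - i - 1) + ((n - j - 1) + 1)) + 1))
      from congrArg _ hn]
    rw [seg_add, Nat.zero_add, seg_succ, seg_add, seg_succ]
    rw [show i.val + 1 + (j.val - i.val - 1) = j.val by omega]
    rw [ext_fin z i, ext_fin z j, seg_congr (ext u) (z := ext z) (z' := ext z0) i 0
      (fun t _ h => he t (by omega) (by omega)),
      seg_congr (ext u) (z := ext z) (z' := ext z0) (j - i - 1) (i.val + 1)
      (fun t h _ => he t (by omega) (by omega)),
      seg_congr (ext u) (z := ext z) (z' := ext z0) (n - j - 1) (j.val + 1)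
      (fun t h _ => he t (by omega) (by omega))]
    simp only [List.append_assoc]
  · intro m h1 h2 h3 h4
    apply seg_mid
    · exact h1
    · omega
    · intro t a b
      have ht : t < n := by have := j.2; omega
      have := h3 ⟨t, ht⟩ (Fin.lt_def.2 a) (Fin.lt_def.2 (by simp only; omega))
      simp [ext, ht, this]
    · intro t a b c
      exact h4 t a (by omega) c

/-- The stretch of positions `[i, j]` is commuting, with empty words and increasing order. -/
def Good (L : ℕ → Set (List Δ)) (W : ℕ → List Δ) (τ : ℕ → ℕ) (i j : ℕ) : Prop :=
  (∀ t, i ≤ t → t ≤ j → [] ∈ L t) ∧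
  (∀ t t', i ≤ t → t ≤ j → i ≤ t' → t' ≤ j → ∀ x ∈ L t, ∀ y ∈ L t', x ++ y = y ++ x) ∧
  ∀ t, i ≤ t → t < j → W (t + 1) = [] ∧ τ t < τ (t + 1)

theorem good_single {L : ℕ → Set (List Δ)} {W : ℕ → List Δ} {τ : ℕ → ℕ} {i : ℕ}
    (h1 : [] ∈ L i) (h2 : ∀ x ∈ L i, ∀ y ∈ L i, x ++ y = y ++ x) : Good L W τ i i := by
  refine ⟨fun t a b => ?_, fun t t' a b c d => ?_, fun t a b => by omega⟩
  · obtain rfl : t = i := by omega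
    exact h1
  · obtain rfl : t = i := by omega
    obtain rfl : t' = t := by omega
    exact h2

theorem good_of_inv (n : ℕ) (L : ℕ → Set (List Δ)) (W : ℕ → List Δ) (τ : ℕ → ℕ)
    (Inv : ℕ → ℕ → Prop)
    (hinv : ∀ i m j, i < m → m < j → j < n → Inv i j → Inv i m ∨ Inv m j)
    (hJ : ∀ i m j, i ≤ m → m < j → j < n → Inv i j → (∀ t, i < t → t < j → [] ∈ L t) →
      (∀ t, i ≤ t → t < j → t ≠ m → W (t + 1) = []) →
      [] ∈ L i ∧ [] ∈ L j ∧ (∀ x ∈ L i, ∀ y ∈ L i, x ++ y = y ++ x) ∧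
      (∀ x ∈ L j, ∀ y ∈ L j, x ++ y = y ++ x) ∧
      ∀ x ∈ L i, ∃ s, x ++ W (m + 1) = W (m + 1) ++ s ∧ ∀ y ∈ L j, s ++ y = y ++ s)
    (hne : ∀ i j, i < j → j < n → Inv i j → (∃ x ∈ L i, x ≠ []) ∧ ∃ y ∈ L j, y ≠ [])
    (h3 : ∀ m, m + 1 < n → QuasiPeriodic (pairLang (L m) (W (m + 1)) (L (m + 1))) →
      EarliestLang (pairLang (L m) (W (m + 1)) (L (m + 1))) ∧ τ m < τ (m + 1)) :
    ∀ d i j, j - i ≤ d → i < j → j < n → Inv i j → Good L W τ i j := by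
  intro d
  induction d with
  | zero => intro i j h h'; omega
  | succ d ih =>
    intro i j hd hij hjn hI
    -- choose the cut point
    obtain ⟨m, him, hmj, hm1, hm2⟩ : ∃ m, i ≤ m ∧ m < j ∧ (m = i ∨ Inv i m) ∧
        (m + 1 = j ∨ Inv (m + 1) j) := by
      classical
      let P : ℕ → Prop := fun m => i ≤ m ∧ m < j ∧ (m = i ∨ Inv i m)
      have hP : P i := ⟨le_rfl, hij, Or.inl rfl⟩
      have hg : P (Nat.findGreatest P j) := Nat.findGreatest_spec hij.le hP
      set m := Nat.findGreatest P j with hm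
      refine ⟨m, hg.1, hg.2.1, hg.2.2, ?_⟩
      by_cases h : m + 1 = j
      · exact Or.inl h
      · right
        have hlt : m + 1 < j := by have := hg.2.1; omega
        rcases hinv i (m + 1) j (by have := hg.1; omega) hlt hjn hI with h' | h'
        · exact absurd (⟨by have := hg.1; omega, hlt, Or.inr h'⟩ : P (m + 1))
            (Nat.findGreatest_is_greatest (Nat.lt_succ_self m) hlt.le)
        · exact h'
    have g1 : m = i ∨ Good L W τ i m := by
      rcases hm1 with h | h
      · exact Or.inl h
      · by_cases hmi : m = i
        · exact Or.inl hmi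
        · exact Or.inr (ih i m (by omega) (by omega) (by omega) h)
    have g2 : m + 1 = j ∨ Good L W τ (m + 1) j := by
      rcases hm2 with h | h
      · exact Or.inl h
      · by_cases hmi : m + 1 = j
        · exact Or.inl hmi
        · exact Or.inr (ih (m + 1) j (by omega) (by omega) (by omega) h)
    obtain ⟨ei, ej, ci, cj, hs⟩ := hJ i m j him hmj hjn hI
      (by
        intro t a b
        by_cases htm : t ≤ m
        · rcases g1 with h | h
          · omega
          · exact h.1 t a.le htm
        · rcases g2 with h | h
          · omega
          · exact h.1 t (by omega) b.le)
      (by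
        intro t a b c
        by_cases htm : t ≤ m
        · rcases g1 with h | h
          · omega
          · exact (h.2.2 t a (by omega)).1
        · rcases g2 with h | h
          · omega
          · exact (h.2.2 t (by omega) b).1)
    have g1 : Good L W τ i m := by
      rcases g1 with h | h
      · subst h; exact good_single ei ci
      · exact h
    have g2 : Good L W τ (m + 1) j := by
      rcases g2 with h | h
      · subst h; exact good_single ej cj
      · exact h
    obtain ⟨⟨z0, hz0, hz0n⟩, ⟨y0, hy0, hy0n⟩⟩ := hne i j hij hjn hI
    obtain ⟨s0, hs0, hs0c⟩ := hs z0 hz0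
    have hs0n : s0 ≠ [] := by
      rintro rfl
      have := congrArg List.length hs0
      simp at this
      exact hz0n this
    have left : ∀ t, i ≤ t → t ≤ m → ∀ x ∈ L t,
        ∃ x', x ++ W (m + 1) = W (m + 1) ++ x' ∧ x' ++ s0 = s0 ++ x' := by
      intro t a b x hx
      exact conj_lemma hz0n (g1.2.1 t i a b le_rfl him x hx z0 hz0) hs0
    have right : ∀ t, m + 1 ≤ t → t ≤ j → ∀ y ∈ L t, y ++ s0 = s0 ++ y := by
      intro t a b y hy
      exact comm_trans hy0n (g2.2.1 t j a b hmj le_rfl y hy y0 hy0) (hs0c y0 hy0)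
    obtain ⟨p, hp⟩ := exists_root hs0n
    have pr : ∀ v ∈ pairLang (L m) (W (m + 1)) (L (m + 1)), ∃ k, v = W (m + 1) ++ listPow p k := by
      rintro _ ⟨x, hx, y, hy, rfl⟩
      obtain ⟨x', hx', hxc⟩ := left m him le_rfl x hx
      obtain ⟨a, rfl⟩ := hp x' hxc
      obtain ⟨b, rfl⟩ := hp y (right (m + 1) le_rfl hmj y hy)
      exact ⟨a + b, by rw [hx', listPow_add, List.append_assoc]⟩
    obtain ⟨he, hτ⟩ := h3 m (by omega) (quasi_left pr)
    have hW : W (m + 1) = [] := he.1 _ (fun v hv => by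
      obtain ⟨k, rfl⟩ := pr v hv
      exact List.prefix_append _ _)
    have all : ∀ t, i ≤ t → t ≤ j → ∀ x ∈ L t, x ++ s0 = s0 ++ x := by
      intro t a b x hx
      by_cases htm : t ≤ m
      · obtain ⟨x', hx', hxc⟩ := left t a htm x hx
        rw [hW] at hx'
        simp at hx'
        rw [hx']; exact hxc
      · exact right t (by omega) b x hx
    refine ⟨fun t a b => ?_, fun t t' a b a' b' x hx y hy => ?_, fun t a b => ?_⟩
    · by_cases htm : t ≤ m
      · exact g1.1 t a htm
      · exact g2.1 t (by omega) b
    · exact comm_trans hs0n (all t a b x hx) (all t' a' b' y hy)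
    · rcases lt_trichotomy t m with h | h | h
      · exact g1.2.2 t a h
      · subst h; exact ⟨hW, hτ⟩
      · exact g2.2.2 t h b

theorem good_lt {L : ℕ → Set (List Δ)} {W : ℕ → List Δ} {τ : ℕ → ℕ} {i j : ℕ} (hij : i < j)
    (h : Good L W τ i j) : τ i < τ j := by
  have : ∀ k, i + k + 1 ≤ j → τ i < τ (i + k + 1) := by
    intro k
    induction k with
    | zero => intro hk; exact (h.2.2 i le_rfl (by omega)).2
    | succ k ih => intro hk; exact (ih (by omega)).trans (h.2.2 (i + k + 1) (by omega) (by omega)).2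
  have := this (j - i - 1) (by omega)
  rwa [show i + (j - i - 1) + 1 = j by omega] at this

/-- The normal form hypotheses for one rule, abstractly. -/
structure Side {n : ℕ} {D : Fin n → Type} (a : ∀ k, D k → List Δ) (σ : Equiv.Perm (Fin n))
    (w : Fin (n + 1) → List Δ) : Prop where
  qp : ∀ k, QuasiPeriodic (Set.range (a k)) → EarliestLang (Set.range (a k))
  er : ∀ i j, Set.range (a (σ i)) = {[]} → i ≤ j → Set.range (a (σ j)) = {[]} ∧ σ i ≤ σ j
  pr : ∀ (i : ℕ) (hi : i + 1 < n),
      QuasiPeriodic (pairLang (Set.range (a (σ ⟨i, Nat.lt_of_succ_lt hi⟩)))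
          (w (Fin.succ ⟨i, Nat.lt_of_succ_lt hi⟩)) (Set.range (a (σ ⟨i + 1, hi⟩)))) →
      EarliestLang (pairLang (Set.range (a (σ ⟨i, Nat.lt_of_succ_lt hi⟩)))
          (w (Fin.succ ⟨i, Nat.lt_of_succ_lt hi⟩)) (Set.range (a (σ ⟨i + 1, hi⟩)))) ∧
      σ ⟨i, Nat.lt_of_succ_lt hi⟩ < σ ⟨i + 1, hi⟩

theorem one_side {n : ℕ} {D : Fin n → Type} [∀ k, Nonempty (D k)] {a b : ∀ k, D k → List Δ}
    {σ σ' : Equiv.Perm (Fin n)} {w w' : Fin (n + 1) → List Δ} {A B A' B' : List Δ}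
    (ha : Side a σ w)
    (h : ∀ x : ∀ k, D k, A ++ interleave n w (fun i => a (σ i) (x (σ i))) ++ B
      = A' ++ interleave n w' (fun i => b (σ' i) (x (σ' i))) ++ B')
    (hne : ∀ i j, i < j → σ'.symm (σ j) < σ'.symm (σ i) →
      Set.range (a (σ i)) ≠ {[]} ∧ Set.range (a (σ j)) ≠ {[]})
    (i j : Fin n) (hij : i < j) (hI : σ'.symm (σ j) < σ'.symm (σ i)) : σ i < σ j := by
  classical
  have nonconst : ∀ k, Set.range (a k) ≠ {[]} → ∃ x1 x2, a k x1 ≠ a k x2 := by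
    intro k hk
    by_contra! hc
    apply hk
    obtain ⟨x0⟩ := ‹∀ k, Nonempty (D k)› k
    have he : a k x0 = [] := by
      refine (ha.qp k (quasi_left (u := a k x0) (w := []) ?_)).1 _ ?_
      · rintro _ ⟨x, rfl⟩
        exact ⟨0, by simp [listPow, hc x x0]⟩
      · rintro _ ⟨x, rfl⟩
        rw [hc x x0]
    ext v
    constructor
    · rintro ⟨x, rfl⟩
      rw [hc x x0, he]; rfl
    · rintro rfl
      exact ⟨x0, he⟩
  let L : ℕ → Set (List Δ) := fun t => if ht : t < n then Set.range (a (σ ⟨t, ht⟩)) else {[]}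
  have hL : ∀ t (ht : t < n), L t = Set.range (a (σ ⟨t, ht⟩)) := fun t ht => by simp [L, ht]
  let τ : ℕ → ℕ := fun t => if ht : t < n then (σ ⟨t, ht⟩).val else 0
  have hτ : ∀ t (ht : t < n), τ t = (σ ⟨t, ht⟩).val := fun t ht => by simp [τ, ht]
  let Inv : ℕ → ℕ → Prop := fun s t => ∃ (hs : s < n) (ht : t < n),
    σ'.symm (σ ⟨t, ht⟩) < σ'.symm (σ ⟨s, hs⟩)
  have key := good_of_inv n L (Δ := Δ) (ext w) τ Inv ?_ ?_ ?_ ?_ n i j (by omega) hij j.2 ⟨i.2, j.2, hI⟩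
  · have := good_lt hij key
    rw [hτ i i.2, hτ j j.2] at this
    exact this
  · rintro i m j him hmj hj ⟨hi, hj', hlt⟩
    have hm : m < n := by omega
    by_cases hc : σ'.symm (σ ⟨m, hm⟩) < σ'.symm (σ ⟨i, hi⟩)
    · exact Or.inl ⟨hi, hm, hc⟩
    · exact Or.inr ⟨hm, hj, lt_of_lt_of_le hlt (not_lt.1 hc)⟩
  · rintro i m j him hmj hj ⟨hi, hj', hlt⟩ hempty hwords
    have hijf : (⟨i, hi⟩ : Fin n) < ⟨j, hj⟩ := Fin.lt_def.2 (by simp only; omega)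
    obtain ⟨ni, nj⟩ := hne _ _ hijf hlt
    have hx0 : ∀ k, ∃ x : D k, [] ∈ Set.range (a k) → a k x = [] := by
      intro k
      by_cases hk : [] ∈ Set.range (a k)
      · obtain ⟨x, hx⟩ := hk
        exact ⟨x, fun _ => hx⟩
      · obtain ⟨x⟩ := ‹∀ k, Nonempty (D k)› k
        exact ⟨x, fun h => absurd h hk⟩
    choose x0 hx0 using hx0
    obtain ⟨P, V, S, hs, hV⟩ := interleave_split2 w (fun i => a (σ i) (x0 (σ i))) _ _ hijf
    obtain ⟨P', V', S', hs', -⟩ := interleave_split2 w' (fun i => b (σ' i) (x0 (σ' i))) _ _ hlt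
    have hVm : V = ext w (m + 1) := by
      refine hV m him hmj ?_ hwords
      intro t h1 h2
      apply hx0
      have := hempty t h1 h2
      rwa [hL t t.2] at this
    have hkk : σ ⟨i, hi⟩ ≠ σ ⟨j, hj⟩ := fun e => hijf.ne (σ.injective e)
    rw [hL i hi, hL j hj]
    have J := keyJ (f := a (σ ⟨i, hi⟩)) (g := a (σ ⟨j, hj⟩)) (a := b (σ ⟨i, hi⟩))
      (b := b (σ ⟨j, hj⟩)) (A := A ++ P) (u := ext w (m + 1)) (B := S ++ B)
      (C := A' ++ P') (V := V') (D := S' ++ B')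
      (by
        intro s t
        have e := h (Function.update (Function.update x0 (σ ⟨i, hi⟩) s) (σ ⟨j, hj⟩) t)
        rw [hs, hs', hVm] at e
        · simp only [dep_apply] at e
          simp only [Function.update_self, Function.update_of_ne hkk] at e
          simpa using e
        · intro p h1 h2
          have e1 : σ' p ≠ σ ⟨j, hj⟩ := fun e => h1 (by rw [← e]; simp)
          have e2 : σ' p ≠ σ ⟨i, hi⟩ := fun e => h2 (by rw [← e]; simp)
          rw [Function.update_of_ne e1, Function.update_of_ne e2]
        · intro p h1 h2
          have e1 : σ p ≠ σ ⟨j, hj⟩ := fun e => h2 (σ.injective e)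
          have e2 : σ p ≠ σ ⟨i, hi⟩ := fun e => h1 (σ.injective e)
          rw [Function.update_of_ne e1, Function.update_of_ne e2])
      (nonconst _ ni) (nonconst _ nj) (ha.qp _) (ha.qp _)
    obtain ⟨j1, j2, j3, j4, j5⟩ := J
    refine ⟨j1, j2, ?_, ?_, ?_⟩
    · rintro _ ⟨x, rfl⟩ _ ⟨y, rfl⟩; exact j3 x y
    · rintro _ ⟨x, rfl⟩ _ ⟨y, rfl⟩; exact j4 x y
    · rintro _ ⟨x, rfl⟩
      obtain ⟨s, q1, q2⟩ := j5 x
      exact ⟨s, q1, by rintro _ ⟨y, rfl⟩; exact q2 y⟩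
  · rintro i j hij hj ⟨hi, hj', hlt⟩
    have hijf : (⟨i, hi⟩ : Fin n) < ⟨j, hj⟩ := Fin.lt_def.2 hij
    obtain ⟨ni, nj⟩ := hne _ _ hijf hlt
    have aux : ∀ k, Set.range (a k) ≠ {[]} → ∃ x ∈ Set.range (a k), x ≠ [] := by
      intro k hk
      obtain ⟨x1, x2, hx⟩ := nonconst k hk
      by_cases h1 : a k x1 = []
      · exact ⟨a k x2, ⟨x2, rfl⟩, fun h2 => hx (h1.trans h2.symm)⟩
      · exact ⟨a k x1, ⟨x1, rfl⟩, h1⟩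
    rw [hL i hi, hL j hj]
    exact ⟨aux _ ni, aux _ nj⟩
  · intro m hm hq
    have hm' : m < n := by omega
    have hw : ext w (m + 1) = w (Fin.succ ⟨m, hm'⟩) := ext_fin w (Fin.succ ⟨m, hm'⟩)
    rw [hL m hm', hL (m + 1) hm, hw] at hq ⊢
    rw [hτ m hm', hτ (m + 1) hm]
    exact ha.pr m hm hq

theorem range_erase {X : Type} [Nonempty X] {f g : X → List Δ}
    (hg : QuasiPeriodic (Set.range g) → EarliestLang (Set.range g)) {P S P' S' : List Δ}
    (h : ∀ x, P ++ f x ++ S = P' ++ g x ++ S') (hf : Set.range f = {[]}) :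
    Set.range g = {[]} := by
  obtain ⟨x0⟩ := ‹Nonempty X›
  have hfx : ∀ x, f x = [] := fun x => by
    have : f x ∈ Set.range f := ⟨x, rfl⟩
    rw [hf] at this
    exact this
  have hc : ∀ x, g x = g x0 := by
    intro x
    have e := (h x).symm.trans ((by rw [hfx, hfx] : P ++ f x ++ S = P ++ f x0 ++ S).trans (h x0))
    exact List.append_cancel_left (List.append_cancel_right e)
  have he : g x0 = [] := by
    refine (hg (quasi_left (u := g x0) (w := []) ?_)).1 _ ?_
    · rintro _ ⟨x, rfl⟩
      exact ⟨0, by simp [listPow, hc x]⟩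
    · rintro _ ⟨x, rfl⟩
      rw [hc x]
  ext v
  constructor
  · rintro ⟨x, rfl⟩
    rw [hc x, he]; rfl
  · rintro rfl
    exact ⟨x0, he⟩

theorem abs_component {n : ℕ} {D : Fin n → Type} [∀ k, Nonempty (D k)] {a b : ∀ k, D k → List Δ}
    {σ σ' : Equiv.Perm (Fin n)} {w w' : Fin (n + 1) → List Δ} {A B A' B' : List Δ}
    (h : ∀ x : ∀ k, D k, A ++ interleave n w (fun i => a (σ i) (x (σ i))) ++ B
      = A' ++ interleave n w' (fun i => b (σ' i) (x (σ' i))) ++ B') (k : Fin n) :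
    ∃ P S P' S', ∀ x, P ++ a k x ++ S = P' ++ b k x ++ S' := by
  classical
  obtain ⟨x0⟩ : Nonempty (∀ k, D k) := inferInstance
  obtain ⟨P, S, hs⟩ := interleave_split1 w (fun i => a (σ i) (x0 (σ i))) (σ.symm k)
  obtain ⟨P', S', hs'⟩ := interleave_split1 w' (fun i => b (σ' i) (x0 (σ' i))) (σ'.symm k)
  refine ⟨A ++ P, S ++ B, A' ++ P', S' ++ B', fun x => ?_⟩
  have e := h (Function.update x0 k x)
  rw [hs, hs'] at e
  · simp only [dep_apply, Function.update_self] at e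
    simpa using e
  · intro t ht
    have : σ' t ≠ k := fun e => ht (by rw [← e]; simp)
    rw [Function.update_of_ne this]
  · intro t ht
    have : σ t ≠ k := fun e => ht (by rw [← e]; simp)
    rw [Function.update_of_ne this]

theorem nonerase {n : ℕ} {D : Fin n → Type} {a b : ∀ k, D k → List Δ}
    {σ σ' : Equiv.Perm (Fin n)} {w w' : Fin (n + 1) → List Δ}
    (ha : Side a σ w) (hb : Side b σ' w')
    (hab : ∀ k, Set.range (a k) = {[]} ↔ Set.range (b k) = {[]})
    (i j : Fin n) (hij : i < j) (hI : σ'.symm (σ j) < σ'.symm (σ i)) :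
    Set.range (a (σ i)) ≠ {[]} ∧ Set.range (a (σ j)) ≠ {[]} := by
  have hj : Set.range (a (σ j)) ≠ {[]} := by
    intro hj
    have hb1 := hb.er _ _ (by rw [Equiv.apply_symm_apply]; exact (hab _).1 hj) hI.le
    rw [Equiv.apply_symm_apply, Equiv.apply_symm_apply] at hb1
    have ha1 := ha.er i j ((hab _).2 hb1.1) hij.le
    exact hij.ne (σ.injective (le_antisymm ha1.2 hb1.2))
  exact ⟨fun hi => hj (ha.er i j hi hij.le).1, hj⟩

theorem abs_perm_eq {n : ℕ} {D : Fin n → Type} [∀ k, Nonempty (D k)] {a b : ∀ k, D k → List Δ}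
    {σ σ' : Equiv.Perm (Fin n)} {w w' : Fin (n + 1) → List Δ} {A B A' B' : List Δ}
    (ha : Side a σ w) (hb : Side b σ' w')
    (h : ∀ x : ∀ k, D k, A ++ interleave n w (fun i => a (σ i) (x (σ i))) ++ B
      = A' ++ interleave n w' (fun i => b (σ' i) (x (σ' i))) ++ B') : σ = σ' := by
  have hab : ∀ k, Set.range (a k) = {[]} ↔ Set.range (b k) = {[]} := by
    intro k
    obtain ⟨P, S, P', S', hk⟩ := abs_component h k
    exact ⟨range_erase (hb.qp k) hk, range_erase (ha.qp k) (fun x => (hk x).symm)⟩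
  have noinv : ∀ i j, i < j → ¬ σ'.symm (σ j) < σ'.symm (σ i) := by
    intro i j hij hI
    have l1 := one_side ha h (nonerase ha hb hab) i j hij hI
    have l2 := one_side hb (fun x => (h x).symm) (nonerase hb ha (fun k => (hab k).symm))
      (σ'.symm (σ j)) (σ'.symm (σ i)) hI (by simpa using hij)
    simp at l2
    exact absurd l1 (not_lt.2 l2.le)
  have mono : StrictMono (σ.trans σ'.symm) := by
    intro i j hij
    rcases lt_trichotomy (σ'.symm (σ i)) (σ'.symm (σ j)) with h | h | h
    · exact h
    · exact absurd (σ.injective (σ'.symm.injective h)) hij.ne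
    · exact absurd h (noinv i j hij)
  have e : ∀ i, σ'.symm (σ i) = i := by
    intro i
    have : (mono.orderIsoOfSurjective _ (σ.trans σ'.symm).surjective) = OrderIso.refl _ :=
      Subsingleton.elim _ _
    exact congrFun (congrArg (fun e : Fin n ≃o Fin n => (e : Fin n → Fin n)) this) i
  ext i : 1
  rw [← Equiv.symm_apply_eq]
  exact e i

end Abstract

section Main
variable {F Δ Q Q' : Type} {ar : F → ℕ}

theorem sem_some {M : LTW F ar Δ Q} {q : Q} {f : F} {r : LTWRule Δ Q (ar f)}
    (hr : M.rules q f = some r) {ts : Fin (ar f) → RTree F ar}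
    (h : ∀ i, (M.semState (ts (r.perm i)) (r.st i)).isSome) :
    M.semState (.node f ts) q = some (interleave (ar f) r.word
      fun i => (M.semState (ts (r.perm i)) (r.st i)).getD []) := by
  rw [LTW.semState, hr]
  simp only
  rw [dif_pos h]
  congr 2
  funext i
  rw [Option.get_eq_getD]

theorem sem_isSome {M : LTW F ar Δ Q} {q : Q} {f : F} {ts : Fin (ar f) → RTree F ar} :
    (M.semState (.node f ts) q).isSome ↔ ∃ r, M.rules q f = some r ∧
      ∀ i, (M.semState (ts (r.perm i)) (r.st i)).isSome := by
  constructor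
  · intro h
    rw [LTW.semState] at h
    split at h
    · simp at h
    · rename_i r hr
      split_ifs at h with h'
      · exact ⟨r, hr, h'⟩
      · simp at h
  · rintro ⟨r, hr, h⟩
    rw [sem_some hr h]; rfl

/-- Equivalence of two states up to fixed outer words. -/
def Conj (M : LTW F ar Δ Q) (M' : LTW F ar Δ Q') (q : Q) (q' : Q') : Prop :=
  ∃ u v u' v' : List Δ, ∀ t, (M.semState t q).map (fun w => u ++ w ++ v)
    = (M'.semState t q').map (fun w => u' ++ w ++ v')

theorem Conj.symm {M : LTW F ar Δ Q} {M' : LTW F ar Δ Q'} {q : Q} {q' : Q'}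
    (h : Conj M M' q q') : Conj M' M q' q := by
  obtain ⟨u, v, u', v', h⟩ := h
  exact ⟨u', v', u, v, fun t => (h t).symm⟩

theorem Conj.isSome {M : LTW F ar Δ Q} {M' : LTW F ar Δ Q'} {q : Q} {q' : Q'}
    (h : Conj M M' q q') (t : RTree F ar) :
    (M.semState t q).isSome ↔ (M'.semState t q').isSome := by
  obtain ⟨u, v, u', v', h⟩ := h
  have := congrArg Option.isSome (h t)
  simp only [Option.isSome_map] at this
  rw [this]

theorem exists_base {M : LTW F ar Δ Q} (hdom : M.NonemptyDoms) {f : F}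
    (r : LTWRule Δ Q (ar f)) :
    ∃ ts : Fin (ar f) → RTree F ar, ∀ k, (M.semState (ts k) (r.st (r.perm.symm k))).isSome := by
  choose t w h using hdom
  exact ⟨fun k => t (r.st (r.perm.symm k)), fun k => by rw [h]; rfl⟩

theorem dom_iff {M : LTW F ar Δ Q} {f : F} {r : LTWRule Δ Q (ar f)}
    {ts : Fin (ar f) → RTree F ar} :
    (∀ i, (M.semState (ts (r.perm i)) (r.st i)).isSome) ↔
      ∀ k, (M.semState (ts k) (r.st (r.perm.symm k))).isSome := by
  constructor
  · intro h k
    have := h (r.perm.symm k)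
    rwa [Equiv.apply_symm_apply] at this
  · intro h i
    have := h (r.perm i)
    rwa [Equiv.symm_apply_apply] at this

theorem Conj.rule {M : LTW F ar Δ Q} {M' : LTW F ar Δ Q'} (hdom : M.NonemptyDoms)
    {q : Q} {q' : Q'} (h : Conj M M' q q') {f : F} {r : LTWRule Δ Q (ar f)}
    (hr : M.rules q f = some r) : ∃ r', M'.rules q' f = some r' := by
  obtain ⟨ts, hts⟩ := exists_base hdom r
  have := (h.isSome _).1 (sem_isSome.2 ⟨r, hr, dom_iff.2 hts⟩)
  obtain ⟨r', hr', -⟩ := sem_isSome.1 this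
  exact ⟨r', hr'⟩

theorem Conj.dom {M : LTW F ar Δ Q} {M' : LTW F ar Δ Q'} (hdom : M.NonemptyDoms)
    {q : Q} {q' : Q'} (h : Conj M M' q q') {f : F} {r : LTWRule Δ Q (ar f)}
    {r' : LTWRule Δ Q' (ar f)} (hr : M.rules q f = some r) (hr' : M'.rules q' f = some r')
    (k : Fin (ar f)) (t : RTree F ar) (ht : (M.semState t (r.st (r.perm.symm k))).isSome) :
    (M'.semState t (r'.st (r'.perm.symm k))).isSome := by
  classical
  obtain ⟨ts, hts⟩ := exists_base hdom r
  have h1 : ∀ j, (M.semState (Function.update ts k t j) (r.st (r.perm.symm j))).isSome := by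
    intro j
    by_cases hj : j = k
    · subst hj; rwa [Function.update_self]
    · rw [Function.update_of_ne hj]; exact hts j
  have := (h.isSome _).1 (sem_isSome.2 ⟨r, hr, dom_iff.2 h1⟩)
  obtain ⟨r'', hr'', h2⟩ := sem_isSome.1 this
  rw [hr'] at hr''
  obtain rfl := Option.some.inj hr''
  have := dom_iff.1 h2 k
  rwa [Function.update_self] at this

/-- Trees on which the `k`-th subtree's state is defined. -/
abbrev Dm (M : LTW F ar Δ Q) {f : F} (r : LTWRule Δ Q (ar f)) (k : Fin (ar f)) : Type :=
  {t : RTree F ar // (M.semState t (r.st (r.perm.symm k))).isSome}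

theorem Conj.eqn {M : LTW F ar Δ Q} {M' : LTW F ar Δ Q'} (hdom : M.NonemptyDoms)
    {q : Q} {q' : Q'} (h : Conj M M' q q') {f : F} {r : LTWRule Δ Q (ar f)}
    {r' : LTWRule Δ Q' (ar f)} (hr : M.rules q f = some r) (hr' : M'.rules q' f = some r') :
    ∃ A B A' B' : List Δ, ∀ x : ∀ k, Dm M r k,
      A ++ interleave (ar f) r.word (fun i =>
        (M.semState (x (r.perm i)).1 (r.st (r.perm.symm (r.perm i)))).getD []) ++ B
      = A' ++ interleave (ar f) r'.word (fun i =>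
        (M'.semState (x (r'.perm i)).1 (r'.st (r'.perm.symm (r'.perm i)))).getD []) ++ B' := by
  have hd := h.dom hdom hr hr'
  obtain ⟨u, v, u', v', h⟩ := h
  refine ⟨u, v, u', v', fun x => ?_⟩
  have e := h (.node f (fun k => (x k).1))
  rw [sem_some hr (dom_iff.2 fun k => (x k).2),
    sem_some hr' (dom_iff.2 fun k => hd k _ (x k).2)] at e
  simp only [Equiv.symm_apply_apply]
  exact Option.some.inj e

theorem range_lang {M : LTW F ar Δ Q} {D : RTree F ar → Prop} {q : Q}
    (hD : ∀ t, D t ↔ (M.semState t q).isSome) :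
    Set.range (fun t : {t // D t} => (M.semState t.1 q).getD []) = M.lang q := by
  ext v
  constructor
  · rintro ⟨⟨t, ht⟩, rfl⟩
    obtain ⟨w, hw⟩ := Option.isSome_iff_exists.1 ((hD t).1 ht)
    exact ⟨t, by simp [hw]⟩
  · rintro ⟨t, ht⟩
    exact ⟨⟨t, (hD t).2 (by rw [ht]; rfl)⟩, by simp [ht]⟩

theorem side_of {M : LTW F ar Δ Q} (h : M.PartialNormalForm) {q : Q} {f : F}
    {r : LTWRule Δ Q (ar f)} (hr : M.rules q f = some r) {D : Fin (ar f) → RTree F ar → Prop}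
    (hD : ∀ k t, D k t ↔ (M.semState t (r.st (r.perm.symm k))).isSome) :
    Side (D := fun k => {t // D k t})
      (fun k t => (M.semState t.1 (r.st (r.perm.symm k))).getD []) r.perm r.word := by
  have hl := fun k => range_lang (hD k)
  have hl' : ∀ i, Set.range (fun t : {t // D (r.perm i) t} =>
      (M.semState t.1 (r.st (r.perm.symm (r.perm i)))).getD []) = M.lang (r.st i) := by
    intro i
    rw [hl, Equiv.symm_apply_apply]
  obtain ⟨h1, h2, h3⟩ := h
  refine ⟨fun k => ?_, fun i j hi hij => ?_, fun i hi => ?_⟩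
  · rw [hl]; exact h1 _
  · rw [hl'] at hi ⊢
    have := h2 q f r hr i j hi hij
    exact ⟨this.1, this.2.1⟩
  · rw [hl', hl']
    exact h3 q f r hr i hi

theorem dm_nonempty {M : LTW F ar Δ Q} (hdom : M.NonemptyDoms) {f : F} (r : LTWRule Δ Q (ar f))
    (k : Fin (ar f)) : Nonempty (Dm M r k) := by
  obtain ⟨ts, hts⟩ := exists_base hdom r
  exact ⟨⟨ts k, hts k⟩⟩

theorem Conj.step {M : LTW F ar Δ Q} {M' : LTW F ar Δ Q'} (hdom : M.NonemptyDoms)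
    (hdom' : M'.NonemptyDoms)
    {q : Q} {q' : Q'} (h : Conj M M' q q') {f : F} {r : LTWRule Δ Q (ar f)}
    {r' : LTWRule Δ Q' (ar f)} (hr : M.rules q f = some r) (hr' : M'.rules q' f = some r')
    (k : Fin (ar f)) : Conj M M' (r.st (r.perm.symm k)) (r'.st (r'.perm.symm k)) := by
  obtain ⟨A, B, A', B', e⟩ := h.eqn hdom hr hr'
  have := dm_nonempty hdom r
  obtain ⟨P, S, P', S', hk⟩ := abs_component (D := Dm M r)
    (a := fun k t => (M.semState t.1 (r.st (r.perm.symm k))).getD [])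
    (b := fun k t => (M'.semState t.1 (r'.st (r'.perm.symm k))).getD []) e k
  refine ⟨P, S, P', S', fun t => ?_⟩
  by_cases ht : (M.semState t (r.st (r.perm.symm k))).isSome
  · have ht' := h.dom hdom hr hr' k t ht
    have := hk ⟨t, ht⟩
    obtain ⟨w, hw⟩ := Option.isSome_iff_exists.1 ht
    obtain ⟨w', hw'⟩ := Option.isSome_iff_exists.1 ht'
    simp only [hw, hw', Option.getD_some] at this
    rw [hw, hw', Option.map_some, Option.map_some, this]
  · have ht' : ¬ (M'.semState t (r'.st (r'.perm.symm k))).isSome :=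
      fun h' => ht (h.symm.dom hdom' hr' hr k t h')
    rw [Option.not_isSome_iff_eq_none] at ht ht'
    rw [ht, ht']; rfl

theorem coReach_conj {M : LTW F ar Δ Q} {M' : LTW F ar Δ Q'} (hdom : M.NonemptyDoms)
    (hdom' : M'.NonemptyDoms) (heq : M.sem = M'.sem) {q : Q} {q' : Q'}
    (h : CoReach M M' q q') : Conj M M' q q' := by
  induction h with
  | base => exact ⟨M.pre, M.post, M'.pre, M'.post, fun t => congrFun heq t⟩
  | step _ hr hr' hij ih =>
    rename_i q₁ q₂ f r₁ r₂ i j _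
    have := ih.step hdom hdom' hr hr' (r₁.perm i)
    rw [Equiv.symm_apply_apply, hij, Equiv.symm_apply_apply] at this
    exact this

end Main

/-- equivalent LTWs in partial normal form are same-ordered. -/
theorem sameOrdered_of_equivalent_partialNormalForm
    {F Δ Q Q' : Type} {ar : F → ℕ} [Finite Q] [Finite Q']
    (M : LTW F ar Δ Q) (M' : LTW F ar Δ Q')
    (hdom : M.NonemptyDoms) (hdom' : M'.NonemptyDoms)
    (heq : M.sem = M'.sem)
    (h : M.PartialNormalForm) (h' : M'.PartialNormalForm) :
    SameOrdered M M' := by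
  intro q q' hq f
  have hc := coReach_conj hdom hdom' heq hq
  cases hr : M.rules q f with
  | none =>
    cases hr' : M'.rules q' f with
    | none => exact Or.inl ⟨rfl, rfl⟩
    | some r' =>
      obtain ⟨r, hr2⟩ := hc.symm.rule hdom' hr'
      rw [hr] at hr2
      exact absurd hr2 (by simp)
  | some r =>
    obtain ⟨r', hr'⟩ := hc.rule hdom hr
    refine Or.inr ⟨r, r', rfl, hr', ?_⟩
    obtain ⟨A, B, A', B', e⟩ := hc.eqn hdom hr hr'
    have := dm_nonempty hdom r
    exact abs_perm_eq (D := Dm M r) (side_of h hr (fun k t => Iff.rfl))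
      (side_of h' hr' (fun k t => (hc.step hdom hdom' hr hr' k).isSome t)) e

end LTWpaper
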